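/- Let SO(3) act diagonally on V = ℂ³ ⊕ ℂ³ (each factor carrying the complexified standard action by matrix multiplication), with moment map J : V → so(3)*, J(z₁,z₂)(ξ) = Im(⟨ξz₁, z₁⟩ + ⟨ξz₂, z₂⟩) for ξ ∈ so(3), where ⟨u,v⟩ = Σᵢ uᵢ \overline{vᵢ}, and set M = J⁻¹(0). Identify ℂ³ ⊕ ℂ³ with (ℝ³)⁴ via (x₁ + iy₁, x₂ + iy₂) ↔ (x₁, y₁, x₂, y₂) and let u₁,u₂,u₃,u₄ denote x₁,y₁,x₂,y₂. Then the restrictions to M of the ten quadratic forms ⟨uᵢ, uⱼ⟩ (1 ≤ i ≤ j ≤ 4) are linearly independent: no nonzero real linear combination of these ten forms vanishes identically on M. -/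

import Mathlib

/-!
Statement 7: For the diagonal SO(3)-action on ℂ³ ⊕ ℂ³ with moment map
`J(z₁,z₂)(ξ) = Im(⟨ξz₁,z₁⟩ + ⟨ξz₂,z₂⟩)` and `M = J⁻¹(0)`, the restrictions to `M` of the ten
quadratic forms `⟨uᵢ,uⱼ⟩` (`i ≤ j`, in the real coordinates `u₁,…,u₄ = x₁,y₁,x₂,y₂`) are
linearly independent.
-/

namespace Stmt7

open Complex

/-- Hermitian pairing `⟨ξ z, z⟩` of a real matrix `ξ` applied to `z` against `z`. -/
noncomputable def pair (ξ : Matrix (Fin 3) (Fin 3) ℝ) (z : Fin 3 → ℂ) : ℂ :=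
  ∑ i, (ξ.map (Complex.ofReal)).mulVec z i * (starRingEnd ℂ) (z i)

/-- The zero set `M = J⁻¹(0)` of the moment map of the SO(3)-action on ℂ³ ⊕ ℂ³:
`J(z)(ξ) = Im(⟨ξz₁,z₁⟩ + ⟨ξz₂,z₂⟩)` for all `ξ ∈ so(3)` (real skew-symmetric matrices). -/
def M : Set ((Fin 3 → ℂ) × (Fin 3 → ℂ)) :=
  {z | ∀ ξ : Matrix (Fin 3) (Fin 3) ℝ, ξ.transpose = -ξ →
    (pair ξ z.1 + pair ξ z.2).im = 0}

/-- The identification of ℂ³ ⊕ ℂ³ with (ℝ³)⁴ via real and imaginary parts: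
`u₁ = x₁, u₂ = y₁, u₃ = x₂, u₄ = y₂`. -/
def toReal (z : (Fin 3 → ℂ) × (Fin 3 → ℂ)) : Fin 4 → Fin 3 → ℝ :=
  ![fun a => (z.1 a).re, fun a => (z.1 a).im, fun a => (z.2 a).re, fun a => (z.2 a).im]

/-- The quadratic form `q_{ij}(u) = ⟨uᵢ, uⱼ⟩`. -/
def qf (i j : Fin 4) (u : Fin 4 → Fin 3 → ℝ) : ℝ := ∑ a, u i a * u j a

/-!
If all four vectors `uᵢ = tᵢ v` are multiples of one real vector `v`, then each `⟨ξzₖ, zₖ⟩` is a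
real multiple of `⟨ξv, v⟩`, so its imaginary part vanishes and the point lies in `M`. Thus `M`
contains a copy of `ℝ⁴` for every `v ≠ 0`. On it `⟨uᵢ, uⱼ⟩ = tᵢ tⱼ ⟨v, v⟩`, and the monomials
`tᵢ tⱼ`, `i ≤ j`, are linearly independent: a bilinear form that is both upper triangular and
alternating is zero.
-/

section Triangular

variable {ι R : Type*} [Fintype ι] [LinearOrder ι] [CommRing R]

open Matrix in
theorem eq_zero_of_blockTriangular_of_isAlt {A : Matrix ι ι R} (hA : A.BlockTriangular id)
    (hAlt : (toBilin' A).IsAlt) : A = 0 := by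
  have diag_eq_zero (i : ι) : A i i = 0 := by
    simpa only [toBilin'_single] using hAlt.self_eq_zero (Pi.single i 1)
  have neg_eq_swap (i j : ι) : -A i j = A j i := by
    simpa only [toBilin'_single] using hAlt.neg_eq (Pi.single i 1) (Pi.single j 1)
  ext i j
  rcases lt_trichotomy i j with hij | rfl | hji
  · exact neg_eq_zero.mp ((neg_eq_swap i j).trans (hA hij))
  · exact diag_eq_zero i
  · exact hA hji

theorem eq_zero_of_sum_upper_mul_mul_eq_zero {c : ι → ι → R}
    (h : ∀ t : ι → R, ∑ i, ∑ j, (if i ≤ j then c i j else 0) * (t i * t j) = 0)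
    {i j : ι} (hij : i ≤ j) : c i j = 0 := by
  set A : Matrix ι ι R := .of fun i j => if i ≤ j then c i j else 0 with hAdef
  have triangular : A.BlockTriangular id := fun i j hji => if_neg hji.not_ge
  have alternating : (Matrix.toBilin' A).IsAlt := fun t => by
    rw [Matrix.toBilin'_apply, ← h t]
    refine Finset.sum_congr rfl fun i _ => Finset.sum_congr rfl fun j _ => ?_
    simp only [hAdef, Matrix.of_apply]
    ring
  have hA := eq_zero_of_blockTriangular_of_isAlt triangular alternating
  simpa [hAdef, hij] using congrFun₂ hA i j

end Triangular

open Matrix in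
theorem pair_mul_ofReal (ξ : Matrix (Fin 3) (Fin 3) ℝ) (w : ℂ) (v : Fin 3 → ℝ) :
    pair ξ (fun a => w * v a) = (normSq w * (v ⬝ᵥ ξ *ᵥ v) : ℝ) := by
  have mulVec_eq (a : Fin 3) : (ξ.map ofReal *ᵥ fun b => w * v b) a = w * ((ξ *ᵥ v) a : ℝ) := by
    simp only [mulVec, dotProduct, map_apply, ofReal_sum, ofReal_mul, Finset.mul_sum]
    exact Finset.sum_congr rfl fun b _ => mul_left_comm _ _ _
  simp only [pair, mulVec_eq, dotProduct, map_mul, conj_ofReal, ofReal_mul, ofReal_sum,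
    Finset.mul_sum, normSq_eq_conj_mul_self]
  exact Finset.sum_congr rfl fun a _ => by ring

/-- The point of `ℂ³ ⊕ ℂ³` all of whose real coordinate vectors lie on the line `ℝv`:
in the notation of the theorem, `z₁ = (t₀ + t₁ I) v` and `z₂ = (t₂ + t₃ I) v`. -/
noncomputable def collinearPoint (v : Fin 3 → ℝ) (t : Fin 4 → ℝ) : (Fin 3 → ℂ) × (Fin 3 → ℂ) :=
  (fun a => ⟨t 0, t 1⟩ * v a, fun a => ⟨t 2, t 3⟩ * v a)

theorem collinearPoint_mem_M (v : Fin 3 → ℝ) (t : Fin 4 → ℝ) : collinearPoint v t ∈ M := by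
  intro ξ _
  simp only [collinearPoint, pair_mul_ofReal, add_im, ofReal_im, add_zero]

theorem toReal_collinearPoint (v : Fin 3 → ℝ) (t : Fin 4 → ℝ) :
    toReal (collinearPoint v t) = fun i => t i • v := by
  ext i a
  fin_cases i <;> simp [toReal, collinearPoint]

theorem qf_toReal_collinearPoint (i j : Fin 4) (v : Fin 3 → ℝ) (t : Fin 4 → ℝ) :
    qf i j (toReal (collinearPoint v t)) = t i * t j * (v ⬝ᵥ v) := by
  rw [toReal_collinearPoint]
  change (t i • v) ⬝ᵥ (t j • v) = _
  rw [smul_dotProduct, dotProduct_smul, smul_eq_mul, smul_eq_mul, mul_assoc]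

theorem quadratic_invariants_linearly_independent_on_M_general
    {v : Fin 3 → ℝ} (hv : v ≠ 0) (c : Fin 4 → Fin 4 → ℝ)
    (hvanish : ∀ t : Fin 4 → ℝ,
      ∑ i : Fin 4, ∑ j : Fin 4,
        (if i ≤ j then c i j else 0) * qf i j (toReal (collinearPoint v t)) = 0) :
    ∀ i j : Fin 4, i ≤ j → c i j = 0 := by
  refine fun i j hij => eq_zero_of_sum_upper_mul_mul_eq_zero (fun t => ?_) hij
  have dotProduct_self_ne_zero : v ⬝ᵥ v ≠ 0 := dotProduct_self_eq_zero.not.mpr hv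
  refine (mul_eq_zero.mp ?_).resolve_right dotProduct_self_ne_zero
  simpa only [qf_toReal_collinearPoint, ← mul_assoc, ← Finset.sum_mul] using hvanish t

/-- No nonzero real linear combination of the ten forms `⟨uᵢ,uⱼ⟩`, `i ≤ j`, vanishes
identically on `M`. -/
theorem quadratic_invariants_linearly_independent_on_M
    (c : Fin 4 → Fin 4 → ℝ)
    (hvanish : ∀ z ∈ M,
      ∑ i : Fin 4, ∑ j : Fin 4, (if i ≤ j then c i j else 0) * qf i j (toReal z) = 0) :
    ∀ i j : Fin 4, i ≤ j → c i j = 0 := by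
  obtain ⟨v, hv⟩ : ∃ v : Fin 3 → ℝ, v ≠ 0 := exists_ne 0
  exact quadratic_invariants_linearly_independent_on_M_general hv c fun t =>
    hvanish _ (collinearPoint_mem_M v t)

end Stmt7
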